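/- arXiv:1909.12459 — 2 statements merged into one kernel-verified Lean document; each statement's English description precedes it below -/
import Mathlib

section
/- Square summability of the iterate differences: if (U^{(k)})_{k≥0} and (V^{(k)})_{k≥0} are alternating-minimization iterates for f, then the series ∑_{k=0}^{∞} (‖U^{(k+1)} − U^{(k)}‖_F² + ‖V^{(k+1)} − V^{(k)}‖_F²) is finite (summable). -/
open Finset Matrix

/-- Squared Frobenius norm: `frobSq X = ‖X‖_F²`. -/
noncomputable def frobSq {a b : ℕ} (X : Matrix (Fin a) (Fin b) ℝ) : ℝ :=
  ∑ i, ∑ j, (X i j) ^ 2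

/-- The matrix-completion objective
`f(U,V) = (1/2)(‖U‖_F² + ‖V‖_F²) + (μ/2) ∑_{(i,j)∈Ω} ((UV − M)_{ij})² + (ν/2) ‖L(UV) − b‖²`. -/
noncomputable def objF {m n r p : ℕ} (Ω : Finset (Fin m × Fin n)) (M : Matrix (Fin m) (Fin n) ℝ)
    (L : Matrix (Fin m) (Fin n) ℝ →ₗ[ℝ] EuclideanSpace ℝ (Fin p))
    (b : EuclideanSpace ℝ (Fin p)) (μ ν : ℝ)
    (U : Matrix (Fin m) (Fin r) ℝ) (V : Matrix (Fin r) (Fin n) ℝ) : ℝ :=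
  (1 / 2) * (frobSq U + frobSq V)
    + (μ / 2) * ∑ ij ∈ Ω, ((U * V - M) ij.1 ij.2) ^ 2
    + (ν / 2) * ‖L (U * V) - b‖ ^ 2

/-!
For a fixed block the objective is `½‖·‖_F²` plus a convex function, hence `1`-strongly convex.
A strongly convex function grows at least quadratically away from a minimizer, so each half-step
of the alternation lowers the objective by at least half the squared length of that step. As the
objective is nonnegative, the decreases telescope to a finite sum.
-/

section Convexity

open Filter Topology

lemma add_modulus_le_of_isMinOn {E : Type*} [NormedAddCommGroup E] [NormedSpace ℝ E]
    {s : Set E} {φ : ℝ → ℝ} {f : E → ℝ} {x y : E} (hf : UniformConvexOn s φ f)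
    (hx : x ∈ s) (hmin : IsMinOn f s x) (hy : y ∈ s) :
    f x + φ ‖y - x‖ ≤ f y := by
  have hsegment : ∀ t ∈ Set.Ioo (0 : ℝ) 1, (1 - t) * φ ‖y - x‖ ≤ f y - f x := by
    rintro t ⟨ht0, ht1⟩
    have hcombo : t • y + (1 - t) • x ∈ s :=
      hf.1 hy hx ht0.le (sub_nonneg.2 ht1.le) (add_sub_cancel t 1)
    have hconv := hf.2 hy hx ht0.le (sub_nonneg.2 ht1.le) (add_sub_cancel t 1)
    have hle := (isMinOn_iff.1 hmin _ hcombo).trans hconv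
    simp only [smul_eq_mul] at hle
    refine le_of_mul_le_mul_left ?_ ht0
    linarith
  have hlim : Tendsto (fun t : ℝ => (1 - t) * φ ‖y - x‖) (𝓝[>] 0) (𝓝 (φ ‖y - x‖)) := by
    refine Tendsto.mono_left ?_ nhdsWithin_le_nhds
    exact Continuous.tendsto' (by fun_prop) _ _ (by ring)
  have hgrowth : φ ‖y - x‖ ≤ f y - f x :=
    le_of_tendsto hlim (by filter_upwards [Ioo_mem_nhdsGT one_pos] with t ht using hsegment t ht)
  linarith

lemma convexOn_finset_sum {𝕜 E β ι : Type*} [Semiring 𝕜] [PartialOrder 𝕜] [AddCommMonoid E]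
    [SMul 𝕜 E] [AddCommMonoid β] [PartialOrder β] [IsOrderedAddMonoid β] [Module 𝕜 β]
    {s : Set E} {t : Finset ι} {f : ι → E → β} (hs : Convex 𝕜 s)
    (hf : ∀ i ∈ t, ConvexOn 𝕜 s (f i)) : ConvexOn 𝕜 s (fun x => ∑ i ∈ t, f i x) := by
  refine ⟨hs, fun x hx y hy a b ha hb hab => ?_⟩
  simp only [Finset.smul_sum, ← Finset.sum_add_distrib]
  exact Finset.sum_le_sum fun i hi => (hf i hi).2 hx hy ha hb hab

lemma convexOn_norm_map_sub_sq {E F : Type*} [AddCommGroup E] [Module ℝ E]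
    [SeminormedAddCommGroup F] [NormedSpace ℝ F] (L : E →ₗ[ℝ] F) (b : F) :
    ConvexOn ℝ Set.univ (fun x => ‖L x - b‖ ^ 2) := by
  simpa only [dist_eq_norm] using!
    ((convexOn_univ_dist b).comp_linearMap L).pow (fun _ _ => dist_nonneg) 2

end Convexity

lemma summable_of_add_le_of_bddBelow {a d : ℕ → ℝ} (hd : ∀ k, 0 ≤ d k)
    (hdecr : ∀ k, a (k + 1) + d k ≤ a k) (ha : BddBelow (Set.range a)) : Summable d := by
  obtain ⟨c, hc⟩ := ha
  refine summable_of_sum_range_le (c := a 0 - c) hd fun N => ?_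
  calc ∑ k ∈ Finset.range N, d k
      ≤ ∑ k ∈ Finset.range N, (a k - a (k + 1)) :=
        Finset.sum_le_sum fun k _ => le_sub_iff_add_le'.2 (hdecr k)
    _ = a 0 - a N := Finset.sum_range_sub' a N
    _ ≤ a 0 - c := sub_le_sub_left (hc (Set.mem_range_self N)) _

/-- Alternating (block-coordinate) minimization of a function `F` of two variables: each step
exactly minimizes over the first variable, then over the second. The starting pair
`(x 0, y 0)` is arbitrary. -/
structure IsAlternatingMinimization {E G : Type*} (F : E → G → ℝ) (x : ℕ → E) (y : ℕ → G) :
    Prop where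
  isMinOn_left (k : ℕ) : IsMinOn (fun e => F e (y k)) Set.univ (x (k + 1))
  isMinOn_right (k : ℕ) : IsMinOn (F (x (k + 1))) Set.univ (y (k + 1))

namespace IsAlternatingMinimization

variable {E G : Type*} [NormedAddCommGroup E] [NormedSpace ℝ E] [NormedAddCommGroup G]
  [NormedSpace ℝ G] {F : E → G → ℝ} {x : ℕ → E} {y : ℕ → G} {φ ψ : ℝ → ℝ}

lemma add_modulus_le (h : IsAlternatingMinimization F x y)
    (hleft : ∀ g, UniformConvexOn Set.univ φ (fun e => F e g))
    (hright : ∀ e, UniformConvexOn Set.univ ψ (F e)) (k : ℕ) :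
    F (x (k + 1)) (y (k + 1)) + (φ ‖x (k + 1) - x k‖ + ψ ‖y (k + 1) - y k‖) ≤ F (x k) (y k) := by
  have hx := add_modulus_le_of_isMinOn (hleft (y k)) (Set.mem_univ _) (h.isMinOn_left k)
    (Set.mem_univ (x k))
  have hy := add_modulus_le_of_isMinOn (hright (x (k + 1))) (Set.mem_univ _) (h.isMinOn_right k)
    (Set.mem_univ (y k))
  rw [norm_sub_rev] at hx hy
  linarith

theorem summable_modulus (h : IsAlternatingMinimization F x y)
    (hleft : ∀ g, UniformConvexOn Set.univ φ (fun e => F e g))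
    (hright : ∀ e, UniformConvexOn Set.univ ψ (F e))
    (hφ : ∀ t, 0 ≤ t → 0 ≤ φ t) (hψ : ∀ t, 0 ≤ t → 0 ≤ ψ t)
    (hF : BddBelow (Set.range fun k => F (x k) (y k))) :
    Summable (fun k => φ ‖x (k + 1) - x k‖ + ψ ‖y (k + 1) - y k‖) :=
  summable_of_add_le_of_bddBelow
    (fun _ => add_nonneg (hφ _ (norm_nonneg _)) (hψ _ (norm_nonneg _)))
    (h.add_modulus_le hleft hright) hF

theorem summable_norm_sub_sq {m : ℝ} (h : IsAlternatingMinimization F x y) (hm : 0 < m)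
    (hleft : ∀ g, StrongConvexOn Set.univ m (fun e => F e g))
    (hright : ∀ e, StrongConvexOn Set.univ m (F e))
    (hF : BddBelow (Set.range fun k => F (x k) (y k))) :
    Summable (fun k => ‖x (k + 1) - x k‖ ^ 2 + ‖y (k + 1) - y k‖ ^ 2) := by
  have hsum := h.summable_modulus hleft hright (fun _ _ => by positivity)
    (fun _ _ => by positivity) hF
  simp only [← mul_add] at hsum
  exact (summable_mul_left_iff (half_pos hm).ne').1 hsum

end IsAlternatingMinimization

section Frobenius

open scoped Matrix.Norms.Frobenius

variable {a b : ℕ}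

lemma frobSq_eq_norm_sq (X : Matrix (Fin a) (Fin b) ℝ) : frobSq X = ‖X‖ ^ 2 := by
  have hnonneg : 0 ≤ ∑ i, ∑ j, X i j ^ 2 := by positivity
  simp only [frobSq, frobenius_norm_def, Real.norm_eq_abs, Real.rpow_two, sq_abs,
    ← Real.sqrt_eq_rpow, Real.sq_sqrt hnonneg]

lemma frobSq_smul_add_smul (X Y : Matrix (Fin a) (Fin b) ℝ) {s t : ℝ} (hst : s + t = 1) :
    frobSq (s • X + t • Y) = s * frobSq X + t * frobSq Y - s * t * frobSq (X - Y) := by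
  obtain rfl := eq_sub_of_add_eq hst
  simp only [frobSq, Finset.mul_sum, ← Finset.sum_add_distrib, ← Finset.sum_sub_distrib,
    Matrix.add_apply, Matrix.sub_apply, Matrix.smul_apply, smul_eq_mul]
  exact Finset.sum_congr rfl fun i _ => Finset.sum_congr rfl fun j _ => by ring

lemma strongConvexOn_half_frobSq :
    StrongConvexOn Set.univ 1 (fun X : Matrix (Fin a) (Fin b) ℝ => 1 / 2 * frobSq X) := by
  refine ⟨convex_univ, fun X _ Y _ s t _ _ hst => le_of_eq ?_⟩
  simp only [frobSq_smul_add_smul X Y hst, ← frobSq_eq_norm_sq, smul_eq_mul]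
  ring

lemma strongConvexOn_half_frobSq_add {g : Matrix (Fin a) (Fin b) ℝ → ℝ}
    (hg : ConvexOn ℝ Set.univ g) :
    StrongConvexOn Set.univ 1 (fun X => 1 / 2 * frobSq X + g X) := by
  simpa only [add_zero] using! strongConvexOn_half_frobSq.add hg.uniformConvexOn_zero

lemma IsAlternatingMinimization.summable_frobSq_sub {c d : ℕ} {m : ℝ}
    {F : Matrix (Fin a) (Fin b) ℝ → Matrix (Fin c) (Fin d) ℝ → ℝ}
    {U : ℕ → Matrix (Fin a) (Fin b) ℝ} {V : ℕ → Matrix (Fin c) (Fin d) ℝ}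
    (h : IsAlternatingMinimization F U V) (hm : 0 < m)
    (hleft : ∀ Y, StrongConvexOn Set.univ m (fun X => F X Y))
    (hright : ∀ X, StrongConvexOn Set.univ m (F X))
    (hF : BddBelow (Set.range fun k => F (U k) (V k))) :
    Summable (fun k => frobSq (U (k + 1) - U k) + frobSq (V (k + 1) - V k)) := by
  simpa only [frobSq_eq_norm_sq] using h.summable_norm_sub_sq hm hleft hright hF

end Frobenius

section Misfit

variable {ι κ F : Type*} [SeminormedAddCommGroup F] [NormedSpace ℝ F] {μ ν : ℝ}

/-- The unregularized part of `objF`, as a function of the completed matrix `X = U * V`: the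
weighted squared residuals of the observed entries and of the linear model. -/
noncomputable def misfit (Ω : Finset (ι × κ)) (M : Matrix ι κ ℝ) (L : Matrix ι κ ℝ →ₗ[ℝ] F)
    (b : F) (μ ν : ℝ) (X : Matrix ι κ ℝ) : ℝ :=
  (μ / 2) * ∑ ij ∈ Ω, ((X - M) ij.1 ij.2) ^ 2 + (ν / 2) * ‖L X - b‖ ^ 2

variable (Ω : Finset (ι × κ)) (M : Matrix ι κ ℝ) (L : Matrix ι κ ℝ →ₗ[ℝ] F) (b : F)

lemma misfit_nonneg (hμ : 0 ≤ μ) (hν : 0 ≤ ν) (X : Matrix ι κ ℝ) :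
    0 ≤ misfit Ω M L b μ ν X := by
  unfold misfit
  positivity

lemma convexOn_misfit (hμ : 0 ≤ μ) (hν : 0 ≤ ν) :
    ConvexOn ℝ Set.univ (misfit Ω M L b μ ν) := by
  have hentry (ij : ι × κ) :
      ConvexOn ℝ Set.univ (fun X : Matrix ι κ ℝ => ((X - M) ij.1 ij.2) ^ 2) := by
    simpa only [Real.norm_eq_abs, sq_abs] using!
      convexOn_norm_map_sub_sq (entryLinearMap ℝ ℝ ij.1 ij.2) (M ij.1 ij.2)
  have hentries := convexOn_finset_sum convex_univ fun ij (_ : ij ∈ Ω) => hentry ij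
  exact (hentries.smul (div_nonneg hμ zero_le_two)).add
    ((convexOn_norm_map_sub_sq L b).smul (div_nonneg hν zero_le_two))

end Misfit

section Objective

open scoped Matrix.Norms.Frobenius

variable {m n r p : ℕ} (Ω : Finset (Fin m × Fin n)) (M : Matrix (Fin m) (Fin n) ℝ)
  (L : Matrix (Fin m) (Fin n) ℝ →ₗ[ℝ] EuclideanSpace ℝ (Fin p)) (b : EuclideanSpace ℝ (Fin p))
  {μ ν : ℝ}

lemma objF_eq_add_misfit (U : Matrix (Fin m) (Fin r) ℝ) (V : Matrix (Fin r) (Fin n) ℝ) :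
    objF Ω M L b μ ν U V = 1 / 2 * frobSq U + 1 / 2 * frobSq V + misfit Ω M L b μ ν (U * V) := by
  simp only [objF, misfit]
  ring

lemma objF_nonneg (hμ : 0 ≤ μ) (hν : 0 ≤ ν) (U : Matrix (Fin m) (Fin r) ℝ)
    (V : Matrix (Fin r) (Fin n) ℝ) : 0 ≤ objF Ω M L b μ ν U V := by
  rw [objF_eq_add_misfit, frobSq_eq_norm_sq, frobSq_eq_norm_sq]
  have hmisfit := misfit_nonneg Ω M L b hμ hν (U * V)
  positivity

lemma strongConvexOn_objF_left (hμ : 0 ≤ μ) (hν : 0 ≤ ν) (V : Matrix (Fin r) (Fin n) ℝ) :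
    StrongConvexOn Set.univ 1 (fun U : Matrix (Fin m) (Fin r) ℝ => objF Ω M L b μ ν U V) := by
  have hconv : ConvexOn ℝ Set.univ (fun U : Matrix (Fin m) (Fin r) ℝ =>
      1 / 2 * frobSq V + misfit Ω M L b μ ν (U * V)) :=
    (convexOn_const _ convex_univ).add
      ((convexOn_misfit Ω M L b hμ hν).comp_linearMap (mulRightLinearMap (Fin m) ℝ V))
  simpa only [objF_eq_add_misfit, add_assoc] using strongConvexOn_half_frobSq_add hconv

lemma strongConvexOn_objF_right (hμ : 0 ≤ μ) (hν : 0 ≤ ν) (U : Matrix (Fin m) (Fin r) ℝ) :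
    StrongConvexOn Set.univ 1 (objF Ω M L b μ ν U) := by
  have hconv : ConvexOn ℝ Set.univ (fun V : Matrix (Fin r) (Fin n) ℝ =>
      1 / 2 * frobSq U + misfit Ω M L b μ ν (U * V)) :=
    (convexOn_const _ convex_univ).add
      ((convexOn_misfit Ω M L b hμ hν).comp_linearMap (mulLeftLinearMap (Fin n) ℝ U))
  convert strongConvexOn_half_frobSq_add hconv using 2 with V
  rw [objF_eq_add_misfit, add_assoc, add_left_comm]

end Objective

/-- Square summability of the iterate differences. -/
theorem objF_iterates_sq_summable {m n r p : ℕ} (Ω : Finset (Fin m × Fin n)) (M : Matrix (Fin m) (Fin n) ℝ)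
    (L : Matrix (Fin m) (Fin n) ℝ →ₗ[ℝ] EuclideanSpace ℝ (Fin p))
    (b : EuclideanSpace ℝ (Fin p)) (μ ν : ℝ) (hμ : 0 < μ) (hν : 0 < ν)
    (U : ℕ → Matrix (Fin m) (Fin r) ℝ) (V : ℕ → Matrix (Fin r) (Fin n) ℝ)
    (hUstep : ∀ (k : ℕ) (U' : Matrix (Fin m) (Fin r) ℝ),
      objF Ω M L b μ ν (U (k + 1)) (V k) ≤ objF Ω M L b μ ν U' (V k))
    (hVstep : ∀ (k : ℕ) (V' : Matrix (Fin r) (Fin n) ℝ),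
      objF Ω M L b μ ν (U (k + 1)) (V (k + 1)) ≤ objF Ω M L b μ ν (U (k + 1)) V') :
    Summable (fun k : ℕ => frobSq (U (k + 1) - U k) + frobSq (V (k + 1) - V k)) := by
  have halt : IsAlternatingMinimization (objF Ω M L b μ ν) U V :=
    ⟨fun k => isMinOn_univ_iff.2 (hUstep k), fun k => isMinOn_univ_iff.2 (hVstep k)⟩
  have hbdd : BddBelow (Set.range fun k => objF Ω M L b μ ν (U k) (V k)) :=
    ⟨0, Set.forall_mem_range.2 fun k => objF_nonneg Ω M L b hμ.le hν.le (U k) (V k)⟩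
  exact halt.summable_frobSq_sub one_pos
    (strongConvexOn_objF_left Ω M L b hμ.le hν.le)
    (strongConvexOn_objF_right Ω M L b hμ.le hν.le) hbdd
end

section
/- Summable convergence of the alternating minimization algorithm (Proposition 1): if (U^{(k)})_{k≥0} and (V^{(k)})_{k≥0} are alternating-minimization iterates for f, then ∑_{k=0}^{∞} (‖U^{(k+1)} − U^{(k)}‖_F + ‖V^{(k+1)} − V^{(k)}‖_F) < +∞. -/
open Finset Matrix

/-!
Along the iterates, strong convexity of `objF` in each block makes the objective drop by at least a
multiple of `d ^ 2`, where `d` is the length of the step, and stationarity of each block bounds the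
gradient at the new point by a multiple of `d`. Since the objective is a polynomial `f`, the
Łojasiewicz inequality `|f| ^ θ ≤ c * ‖∇f‖` with `θ < 1` holds where `f` is small, and the concave
function `h ↦ h ^ (1 - θ)` turns these bounds into a telescoping bound on `∑ d`.

The Łojasiewicz inequality is proved algebraically. On the chart of the blow-up of the ideal
`(f, ∂₁f, …, ∂ₙf)` where a generator `g` divides the others, `df = g • ω` for a regular differential
`ω`. Over a discrete valuation ring of residue characteristic zero a nonunit `f ≠ 0` never divides
`df`, so `f / g` vanishes along every component of `f = 0` in the normalised chart. Hence
`(f / g) ^ n = f * b` with `b` regular, thus bounded on the part of a box where `g` dominates the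
other generators. Taking for `g` the largest generator gives `|f| ^ (n - 1) ≤ c * ‖∇f‖ ^ n`.
-/

section CoefficientField

open IsLocalRing Polynomial

variable {K A : Type*} [Field K] [CommRing A] [Algebra K A] {t : A}

theorem aeval_X_mul_derivative_eq_zero (htn : IsNilpotent t) {p : K[X]} (hp : aeval t p = 0) :
    aeval t (X * derivative p) = 0 := by
  rcases eq_or_ne p 0 with rfl | hp0
  · simp
  obtain ⟨q, hpq, hq⟩ := exists_eq_pow_rootMultiplicity_mul_and_not_dvd p hp0 0
  set j := p.rootMultiplicity 0
  have hq0 : q.coeff 0 ≠ 0 := by rwa [C_0, sub_zero, X_dvd_iff] at hq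
  have hunit : IsUnit (aeval t q) := by
    rw [← divX_mul_X_add q, map_add, map_mul, aeval_X, aeval_C, add_comm]
    exact ((Commute.all _ _).isNilpotent_mul_left htn).isUnit_add_left_of_commute
      ((IsUnit.mk0 _ hq0).map (algebraMap K A)) (Commute.all _ _)
  have htj : t ^ j = 0 := by
    rw [hpq] at hp
    simpa [hunit.mul_left_eq_zero] using hp
  have hder : X * derivative p = X ^ j * (C (j : K) * q + X * derivative q) := by
    rw [hpq]
    cases j with
    | zero => simp
    | succ j =>
      simp only [derivative_mul, derivative_X_pow, C_0, sub_zero, Nat.add_sub_cancel]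
      ring
  rw [hder, map_mul, map_pow, aeval_X, htj, zero_mul]

variable [IsLocalRing A]

theorem exists_pow_dvd_sub_aeval
    (hK : Function.Surjective (algebraMap K (ResidueField A)))
    (ht : maximalIdeal A = Ideal.span {t}) (n : ℕ) (x : A) :
    ∃ p : K[X], t ^ n ∣ x - aeval t p := by
  induction n generalizing x with
  | zero => exact ⟨0, by simp⟩
  | succ n ih =>
    obtain ⟨c, hc⟩ := hK (residue A x)
    have hmem : x - algebraMap K A c ∈ maximalIdeal A := by
      rw [← residue_eq_zero_iff, map_sub, sub_eq_zero, ← hc]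
      rfl
    obtain ⟨y, hy⟩ := Ideal.mem_span_singleton'.1 (ht ▸ hmem)
    obtain ⟨p, hp⟩ := ih y
    refine ⟨C c + X * p, ?_⟩
    have : x - aeval t (C c + X * p) = t * (y - aeval t p) := by
      simp only [map_add, map_mul, aeval_C, aeval_X]
      linear_combination -hy
    rw [this, pow_succ']
    exact mul_dvd_mul_left t hp

theorem aeval_surjective_of_isNilpotent
    (hK : Function.Surjective (algebraMap K (ResidueField A)))
    (ht : maximalIdeal A = Ideal.span {t}) (htn : IsNilpotent t) :
    Function.Surjective (aeval t : K[X] →ₐ[K] A) := by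
  intro x
  obtain ⟨n, hn⟩ := htn
  obtain ⟨p, hp⟩ := exists_pow_dvd_sub_aeval hK ht n x
  rw [hn, zero_dvd_iff, sub_eq_zero] at hp
  exact ⟨p, hp.symm⟩

-- `δ` is the Euler derivation `X * d/dX` of `K[X]`, which descends to `A`, a quotient of `K[X]`.
theorem exists_derivation_apply_eq_self
    (hK : Function.Surjective (algebraMap K (ResidueField A)))
    (ht : maximalIdeal A = Ideal.span {t}) (htn : IsNilpotent t) :
    ∃ δ : Derivation K A A, δ t = t ∧ ∀ x, t ∣ δ x := by
  have hsurj := aeval_surjective_of_isNilpotent hK ht htn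
  let euler : Derivation K K[X] K[X] := (X : K[X]) • derivative'
  have hker (p : K[X]) (hp : aeval t p = 0) : aeval t (euler p) = 0 :=
    aeval_X_mul_derivative_eq_zero htn hp
  let δ := Derivation.liftOfSurjective hsurj hker
  have hδ (p : K[X]) : δ (aeval t p) = aeval t (X * derivative p) :=
    Derivation.liftOfSurjective_apply hsurj hker p
  refine ⟨δ, by simpa using hδ X, fun x ↦ ?_⟩
  obtain ⟨p, rfl⟩ := hsurj x
  rw [hδ, map_mul, aeval_X]
  exact dvd_mul_right _ _

end CoefficientField

section Differentials

open IsLocalRing KaehlerDifferential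

variable (k : Type*) [Field k] [CharZero k]

theorem formallySmooth_field_of_charZero (K : Type*) [Field K] [Algebra k K] :
    Algebra.FormallySmooth k K := by
  obtain ⟨s, hs⟩ := exists_isTranscendenceBasis k K
  have := hs.isAlgebraic_field
  exact .of_algebraicIndependent_of_isSeparable hs.1

theorem exists_algHom_residue_comp_eq_id {A : Type*} [CommRing A] [IsLocalRing A] [Algebra k A]
    (h : IsNilpotent (maximalIdeal A)) :
    ∃ s : ResidueField A →ₐ[k] A, ∀ c, residue A (s c) = c := by
  have := formallySmooth_field_of_charZero k (ResidueField A)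
  obtain ⟨s, hs⟩ := Algebra.FormallySmooth.exists_lift (maximalIdeal A) h
    (AlgHom.id k (ResidueField A))
  exact ⟨s, DFunLike.congr_fun hs⟩

theorem exists_derivation_apply_eq_self_of_charZero {A : Type*} [CommRing A] [IsLocalRing A]
    [Algebra k A] {t : A} (ht : maximalIdeal A = Ideal.span {t}) (htn : IsNilpotent t) :
    ∃ δ : Derivation k A A, δ t = t ∧ ∀ x, t ∣ δ x := by
  have hnil : IsNilpotent (maximalIdeal A) := by
    obtain ⟨n, hn⟩ := htn
    exact ⟨n, by simp [ht, Ideal.span_singleton_pow, hn]⟩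
  obtain ⟨s, hs⟩ := exists_algHom_residue_comp_eq_id k hnil
  let _ : Algebra (ResidueField A) A := s.toRingHom.toAlgebra
  have : IsScalarTower k (ResidueField A) A := .of_algHom s
  obtain ⟨δ, hδ⟩ := exists_derivation_apply_eq_self (K := ResidueField A)
    (fun c ↦ ⟨c, hs c⟩) ht htn
  exact ⟨δ.restrictScalars k, hδ⟩

variable {k}

theorem dvd_liftKaehlerDifferential {R A : Type*} [CommRing R] [CommRing A] [Algebra R A]
    {δ : Derivation R A A} {t : A} (h : ∀ x, t ∣ δ x) (ω : Ω[A⁄R]) :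
    t ∣ δ.liftKaehlerDifferential ω := by
  have hle : Submodule.span A (Set.range (D R A)) ≤
      Submodule.comap δ.liftKaehlerDifferential (Ideal.span {t}) := by
    rw [Submodule.span_le]
    rintro _ ⟨x, rfl⟩
    simpa [Ideal.mem_span_singleton] using h x
  rw [KaehlerDifferential.span_range_derivation] at hle
  exact Ideal.mem_span_singleton.1 (hle (Submodule.mem_top (x := ω)))

theorem D_ne_smul_of_pow_eq_zero {A : Type*} [CommRing A] [IsLocalRing A] [Algebra k A] {t : A}
    (ht : maximalIdeal A = Ideal.span {t}) {a : ℕ} (ha : a ≠ 0) (hta : t ^ a ≠ 0)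
    (hta' : t ^ (a + 1) = 0) {u : A} (hu : IsUnit u) (ω : Ω[A⁄k]) :
    D k A (u * t ^ a) ≠ (u * t ^ a) • ω := by
  intro h
  obtain ⟨δ, hδt, hδ⟩ := exists_derivation_apply_eq_self_of_charZero k ht ⟨a + 1, hta'⟩
  obtain ⟨v, hv⟩ := dvd_liftKaehlerDifferential hδ ω
  obtain ⟨w, hw⟩ := hδ u
  -- Apply `δ` to both sides of `h`: modulo `t ^ (a + 1)`, it scales `u * t ^ a` by `a`.
  have hmul : a * (u * t ^ a) = 0 := by
    have hpow : t ^ (a - 1) * t = t ^ a := pow_sub_one_mul ha t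
    have := congrArg δ.liftKaehlerDifferential h
    rw [Derivation.liftKaehlerDifferential_comp_D, map_smul, hv] at this
    simp only [Derivation.leibniz, Derivation.leibniz_pow, hδt, hw, smul_eq_mul,
      nsmul_eq_mul] at this
    linear_combination this + (u * v - w) * hta' - u * a * hpow
  have haunit : IsUnit (a : A) := by
    simpa using (IsUnit.mk0 (a : k) (Nat.cast_ne_zero.2 ha)).map (algebraMap k A)
  rw [haunit.mul_right_eq_zero, hu.mul_right_eq_zero] at hmul
  exact hta hmul

theorem exists_D_algebraMap_eq_smul {R A B : Type*} [CommRing R] [CommRing A]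
    [CommRing B] [Algebra R A] [Algebra R B] [Algebra A B] [IsScalarTower R A B] {f g : A}
    (h : ∃ ω, D R A f = g • ω) :
    ∃ ω, D R B (algebraMap A B f) = algebraMap A B g • ω := by
  obtain ⟨ω, hω⟩ := h
  refine ⟨KaehlerDifferential.map R R A B ω, ?_⟩
  rw [algebraMap_smul, ← map_smul, ← hω, map_D]

theorem D_ne_smul_of_isDiscreteValuationRing {O : Type*} [CommRing O] [IsDomain O]
    [IsDiscreteValuationRing O] [Algebra k O] {f : O} (hf0 : f ≠ 0) (hf : f ∈ maximalIdeal O)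
    (ω : Ω[O⁄k]) : D k O f ≠ f • ω := by
  intro h
  obtain ⟨t, ht⟩ := IsDiscreteValuationRing.exists_irreducible O
  obtain ⟨a, u, rfl⟩ := IsDiscreteValuationRing.eq_unit_mul_pow_irreducible hf0 ht
  have ha : a ≠ 0 := by
    rintro rfl
    simp at hf
  -- Modulo `t ^ (a + 1)` the maximal ideal is nilpotent, so a coefficient field exists.
  let I : Ideal O := Ideal.span {t ^ (a + 1)}
  let q : O →ₐ[k] O ⧸ I := Ideal.Quotient.mkₐ k I
  have hq : Function.Surjective q := Ideal.Quotient.mk_surjective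
  have hq0 (x : O) : q x = 0 ↔ t ^ (a + 1) ∣ x := Ideal.Quotient.eq_zero_iff_dvd _ _
  have hta : q t ^ a ≠ 0 := by
    rw [← map_pow, Ne, hq0, pow_dvd_pow_iff ht.ne_zero ht.not_isUnit]
    omega
  have : Nontrivial (O ⧸ I) := ⟨_, _, hta⟩
  have := IsLocalRing.of_surjective' q.toRingHom hq
  have hmax : maximalIdeal (O ⧸ I) = Ideal.span {q t} := by
    rw [← map_maximalIdeal_of_surjective q.toRingHom hq, ht.maximalIdeal_eq, Ideal.map_span,
      Set.image_singleton]
    rfl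
  have hω : ∃ ω, D k (O ⧸ I) (q (u * t ^ a)) = q (u * t ^ a) • ω :=
    exists_D_algebraMap_eq_smul ⟨ω, h⟩
  obtain ⟨ω', hω'⟩ := hω
  rw [map_mul, map_pow] at hω'
  refine D_ne_smul_of_pow_eq_zero hmax ha hta ?_ (u.isUnit.map q) ω' hω'
  rw [← map_pow, hq0]

theorem isDiscreteValuationRing_localization_of_height_le_one {R : Type*} [CommRing R] [IsDomain R]
    [IsNoetherianRing R] [IsIntegrallyClosed R] (P : Ideal R) [P.IsPrime] (hP0 : P ≠ ⊥)
    (hP : P.height ≤ 1) : IsDiscreteValuationRing (Localization.AtPrime P) := by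
  have hdim : Ring.KrullDimLE 1 (Localization.AtPrime P) := by
    rw [Ring.krullDimLE_iff, IsLocalization.AtPrime.ringKrullDim_eq_height P]
    exact_mod_cast hP
  have : IsIntegrallyClosed (Localization.AtPrime P) :=
    isIntegrallyClosed_of_isLocalization _ P.primeCompl P.primeCompl_le_nonZeroDivisors
  have : IsNoetherianRing (Localization.AtPrime P) :=
    IsLocalization.isNoetherianRing P.primeCompl _ inferInstance
  have hfield : ¬ IsField (Localization.AtPrime P) :=
    IsLocalization.AtPrime.not_isField R hP0 _
  have hmax : ∀ Q : Ideal (Localization.AtPrime P), Q ≠ ⊥ → Q.IsPrime → Q = maximalIdeal _ :=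
    fun Q hQ0 hQ ↦ eq_maximalIdeal (Ring.krullDimLE_one_iff_of_noZeroDivisors.1 hdim Q hQ0 hQ)
  have htfae := tfae_of_isNoetherianRing_of_isLocalRing_of_isDomain (Localization.AtPrime P)
  have hprinc : IsPrincipalIdealRing (Localization.AtPrime P) :=
    (htfae.out 0 3 rfl rfl).2 ⟨inferInstance, hmax⟩
  exact { hprinc with not_a_field' := by rwa [Ne, ← isField_iff_maximalIdeal_eq] }

-- Noether normalisation makes `B` finite over a polynomial ring, with separable fraction fields.
attribute [local instance] FractionRing.liftAlgebra in
theorem isNoetherianRing_integralClosure (k B : Type*) [Field k] [CharZero k] [CommRing B]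
    [IsDomain B] [Algebra k B] [Algebra.FiniteType k B] :
    IsNoetherianRing (integralClosure B (FractionRing B)) := by
  obtain ⟨s, g, hg, hfin⟩ := exists_finite_inj_algHom_of_fg k B
  let A := MvPolynomial (Fin s) k
  let _ : Algebra A B := g.toRingHom.toAlgebra
  have : Module.Finite A B := hfin
  have : FaithfulSMul A B := (faithfulSMul_iff_algebraMap_injective A B).2 hg
  let K := FractionRing A
  let L := FractionRing B
  have : CharZero K := charZero_of_injective_algebraMap (algebraMap k K).injective
  have : IsIntegralClosure (integralClosure B L) A L := by
    refine ⟨Subtype.val_injective, fun {x} ↦ ?_⟩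
    rw [← IsIntegralClosure.isIntegral_iff (R := B) (A := integralClosure B L)]
    exact ⟨IsIntegral.tower_top, isIntegral_trans x⟩
  have : Module.Finite K L := .of_isLocalization A B (nonZeroDivisors A)
  exact IsIntegralClosure.isNoetherianRing A K L (integralClosure B L)

theorem mem_radical_span_of_D_eq_smul_of_isIntegrallyClosed {R : Type*} [CommRing R] [IsDomain R]
    [IsNoetherianRing R] [IsIntegrallyClosed R] [Algebra k R] {f g w : R} (hf : f ≠ 0)
    (hgw : f = g * w) (h : ∃ ω, D k R f = g • ω) : w ∈ (Ideal.span {f}).radical := by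
  rw [← Ideal.sInf_minimalPrimes, Ideal.mem_sInf]
  intro P hP
  by_contra hw
  have := hP.isPrime
  have hfP : f ∈ P := hP.1.2 (Ideal.mem_span_singleton_self f)
  have hheight : P.height ≤ 1 := Ideal.height_le_one_of_isPrincipal_of_mem_minimalPrimes _ P hP
  have := isDiscreteValuationRing_localization_of_height_le_one P
    (fun h ↦ hf (by simpa [h] using hfP)) hheight
  -- If `w = f / g` were a unit in the discrete valuation ring `O`, then `f` would divide `df`.
  let O := Localization.AtPrime P
  obtain ⟨ω, hω⟩ := exists_D_algebraMap_eq_smul (B := O) h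
  obtain ⟨v, hv⟩ : IsUnit (algebraMap R O w) :=
    IsLocalization.map_units (M := P.primeCompl) O ⟨w, hw⟩
  have hf0 : algebraMap R O f ≠ 0 := by simpa using hf
  refine D_ne_smul_of_isDiscreteValuationRing hf0
    ((IsLocalization.AtPrime.to_map_mem_maximal_iff O P f).2 hfP) ((↑v⁻¹ : O) • ω) ?_
  rw [hω, smul_smul, hgw, map_mul, ← hv, Units.mul_inv_cancel_right]

theorem mem_radical_of_algebraMap_mem_radical_map {R S : Type*} [CommRing R] [CommRing S]
    [IsDomain S] [Algebra R S] [FaithfulSMul R S] [Algebra.IsIntegral R S] {I : Ideal R} {x : R}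
    (hx : algebraMap R S x ∈ (I.map (algebraMap R S)).radical) : x ∈ I.radical := by
  rw [Ideal.radical_eq_sInf, Ideal.mem_sInf]
  rintro P ⟨hIP, hP⟩
  obtain ⟨Q, hQ, rfl⟩ := Ideal.exists_ideal_over_prime_of_isIntegral_of_isDomain (S := S) P
    (by simp [(RingHom.injective_iff_ker_eq_bot _).1 (FaithfulSMul.algebraMap_injective R S)])
  exact hQ.radical_le_iff.2 (Ideal.map_le_iff_le_comap.2 hIP) hx

theorem mem_radical_span_of_D_eq_smul {B : Type*} [CommRing B] [IsDomain B] [Algebra k B]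
    [Algebra.FiniteType k B] {f g w : B} (hf : f ≠ 0) (hgw : f = g * w)
    (h : ∃ ω, D k B f = g • ω) : w ∈ (Ideal.span {f}).radical := by
  let K := FractionRing B
  let N := integralClosure B K
  have : IsNoetherianRing N := isNoetherianRing_integralClosure k B
  have : IsIntegrallyClosed N := integralClosure.isIntegrallyClosedOfFiniteExtension K
  refine mem_radical_of_algebraMap_mem_radical_map (S := N) ?_
  rw [Ideal.map_span, Set.image_singleton]
  exact mem_radical_span_of_D_eq_smul_of_isIntegrallyClosed (k := k) (by simpa using hf)
    (by rw [hgw, map_mul]) (exists_D_algebraMap_eq_smul h)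

end Differentials

section Lojasiewicz

open MvPolynomial

variable {σ : Type*}

theorem derivation_aeval_eq_sum_pderiv [Fintype σ] {R A M : Type*} [CommRing R] [CommRing A]
    [Algebra R A] [AddCommGroup M] [Module R M] [Module A M] (d : Derivation R A M) (a : σ → A)
    (p : MvPolynomial σ R) : d (aeval a p) = ∑ i, aeval a (pderiv i p) • d (a i) := by
  classical
  induction p using MvPolynomial.induction_on with
  | C c => simp
  | add p q hp hq => simp only [map_add, hp, hq, add_smul, Finset.sum_add_distrib]
  | mul_X p j hp =>
    simp [hp, pderiv_X, Pi.single_apply, apply_ite, ite_smul, add_smul, mul_smul,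
      Finset.sum_add_distrib, Finset.smul_sum, smul_comm (a j)]

/-- The gradient of the polynomial `f` at `x`. As a vector of `σ → ℝ` it carries the sup norm, which
serves in place of the Euclidean norm of the usual Łojasiewicz inequality. -/
noncomputable def evalGradient (f : MvPolynomial σ ℝ) (x : σ → ℝ) : σ → ℝ :=
  fun i ↦ eval x (pderiv i f)

theorem aeval_algebraMap_X {k : Type*} [CommRing k] (S : Type*) [CommRing S]
    [Algebra (MvPolynomial σ k) S] [Algebra k S] [IsScalarTower k (MvPolynomial σ k) S]
    (p : MvPolynomial σ k) :
    aeval (fun i ↦ algebraMap (MvPolynomial σ k) S (X i)) p = algebraMap _ S p := by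
  rw [← Function.comp_def, aeval_algebraMap_apply, aeval_X_left_apply]

theorem evalGradient_sub_C (f : MvPolynomial σ ℝ) (a : ℝ) (x : σ → ℝ) :
    evalGradient (f - C a) x = evalGradient f x := by
  ext i
  simp only [evalGradient, map_sub, pderiv_C, sub_zero]

theorem exists_bound_of_mem_adjoin {ι T : Type*} [CommRing T] [Algebra ℝ T] (e : ι → T →ₐ[ℝ] ℝ)
    {s : Set T} (hs : ∀ y ∈ s, ∃ c, ∀ i, |e i y| ≤ c) {b : T} (hb : b ∈ Algebra.adjoin ℝ s) :
    ∃ c, ∀ i, |e i b| ≤ c := by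
  induction hb using Algebra.adjoin_induction with
  | mem y hy => exact hs y hy
  | algebraMap c => exact ⟨|c|, fun i ↦ by simp⟩
  | add y z _ _ hy hz =>
    obtain ⟨c, hc⟩ := hy
    obtain ⟨d, hd⟩ := hz
    exact ⟨c + d, fun i ↦ by rw [map_add]; exact (abs_add_le _ _).trans (add_le_add (hc i) (hd i))⟩
  | mul y z _ _ hy hz =>
    obtain ⟨c, hc⟩ := hy
    obtain ⟨d, hd⟩ := hz
    refine ⟨c * d, fun i ↦ ?_⟩
    rw [map_mul, abs_mul]
    exact mul_le_mul (hc i) (hd i) (abs_nonneg _) ((abs_nonneg _).trans (hc i))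

theorem exists_bound_eval_of_abs_le (p : MvPolynomial σ ℝ) (r : ℝ) :
    ∃ c, ∀ x : σ → ℝ, (∀ i, |x i| ≤ r) → |eval x p| ≤ c := by
  let e (x : {x : σ → ℝ // ∀ i, |x i| ≤ r}) : MvPolynomial σ ℝ →ₐ[ℝ] ℝ := aeval x.1
  have hX : ∀ q ∈ Set.range (X : σ → MvPolynomial σ ℝ), ∃ c, ∀ x, |e x q| ≤ c := by
    rintro _ ⟨i, rfl⟩
    exact ⟨r, fun x ↦ by simpa [e] using x.2 i⟩
  obtain ⟨c, hc⟩ := exists_bound_of_mem_adjoin e hX (b := p) (by simp [adjoin_range_X])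
  exact ⟨c, fun x hx ↦ hc ⟨x, hx⟩⟩

variable {k T : Type*} [Field k] [CommRing T] [Algebra k T]

/-- Chart of the blow-up of the ideal generated by `f` and its partial derivatives, with coordinate
functions `a` and exceptional divisor `g`, where `h` stands for `g⁻¹`. -/
noncomputable def gradientChart (a : σ → T) (f : MvPolynomial σ k) (g h : T) : Subalgebra k T :=
  Algebra.adjoin k (Set.range a ∪ {g, aeval a f * h} ∪ Set.range fun i ↦ aeval a (pderiv i f) * h)

theorem exists_mem_gradientChart_mul_pow_eq_mul [Finite σ] [CharZero k] [IsDomain T] (a : σ → T)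
    {f : MvPolynomial σ k} (hf : aeval a f ≠ 0) {g h : T} (hgh : g * h = 1) :
    ∃ n, ∃ b ∈ gradientChart a f g h, (aeval a f * h) ^ n = aeval a f * b := by
  have := Fintype.ofFinite σ
  let B := gradientChart a f g h
  have hfin : Algebra.FiniteType k B :=
    (Subalgebra.fg_iff_finiteType _).1 <| Subalgebra.fg_def.2 ⟨_,
      ((Set.finite_range _).union (Set.toFinite _)).union (Set.finite_range _), rfl⟩
  let x (i : σ) : B := ⟨a i, Algebra.subset_adjoin (.inl (.inl ⟨i, rfl⟩))⟩
  let y : B := ⟨g, Algebra.subset_adjoin (.inl (.inr (.inl rfl)))⟩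
  let w : B := ⟨aeval a f * h, Algebra.subset_adjoin (.inl (.inr (.inr rfl)))⟩
  let dw (i : σ) : B := ⟨aeval a (pderiv i f) * h, Algebra.subset_adjoin (.inr ⟨i, rfl⟩)⟩
  have hx (p : MvPolynomial σ k) : (aeval x p : T) = aeval a p :=
    MvPolynomial.comp_aeval_apply x B.val p
  have hdiv (c : T) : c = g * (c * h) := by linear_combination -c * hgh
  have hfw : aeval x f = y * w := Subtype.ext ((hx f).trans (hdiv _))
  have hdw (i : σ) : aeval x (pderiv i f) = y * dw i := Subtype.ext ((hx _).trans (hdiv _))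
  have hw : w ∈ (Ideal.span {aeval x f}).radical := by
    refine mem_radical_span_of_D_eq_smul (k := k) (fun h0 ↦ hf ?_) hfw
      ⟨∑ i, dw i • KaehlerDifferential.D k B (x i), ?_⟩
    · rw [← hx, h0, ZeroMemClass.coe_zero]
    · rw [derivation_aeval_eq_sum_pderiv, Finset.smul_sum]
      simp only [hdw, mul_smul]
  obtain ⟨n, hn⟩ := hw
  obtain ⟨b, hb⟩ := Ideal.mem_span_singleton.1 hn
  have hbT : (aeval a f * h) ^ n = (aeval x f : B) * (b : T) := congrArg Subtype.val hb
  exact ⟨n, b, b.2, by rw [hbT, hx]⟩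

/-- The points of the box `[-r, r]^σ` at which `g` does not vanish and dominates `f` together with
its partial derivatives. -/
def dominationRegion (f g : MvPolynomial σ ℝ) (r : ℝ) : Set (σ → ℝ) :=
  {x | (∀ i, |x i| ≤ r) ∧ eval x g ≠ 0 ∧ |eval x f| ≤ |eval x g| ∧
    ∀ i, |eval x (pderiv i f)| ≤ |eval x g|}

variable {f g : MvPolynomial σ ℝ} {r : ℝ}

/-- Evaluation at a point `x` where `g` does not vanish, extended to polynomials divided by powers
of `g`. -/
noncomputable def awayEval (x : dominationRegion f g r) : Localization.Away g →ₐ[ℝ] ℝ :=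
  IsLocalization.Away.liftAlgHom g (f := aeval x.1) (IsUnit.mk0 _ x.2.2.1)

theorem awayEval_algebraMap (x : dominationRegion f g r) (p : MvPolynomial σ ℝ) :
    awayEval x (algebraMap _ _ p) = eval x.1 p :=
  IsLocalization.Away.lift_eq g (IsUnit.mk0 _ x.2.2.1) p

theorem awayEval_mul_invSelf (x : dominationRegion f g r) (p : MvPolynomial σ ℝ) :
    awayEval x (algebraMap _ _ p * IsLocalization.Away.invSelf g) = eval x.1 p / eval x.1 g := by
  rw [eq_div_iff x.2.2.1, ← awayEval_algebraMap, ← awayEval_algebraMap x p, ← map_mul, mul_assoc,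
    mul_comm (IsLocalization.Away.invSelf g), IsLocalization.Away.mul_invSelf, mul_one]

theorem exists_bound_awayEval {b : Localization.Away g}
    (hb : b ∈ gradientChart (fun i ↦ algebraMap (MvPolynomial σ ℝ) _ (X i)) f
      (algebraMap (MvPolynomial σ ℝ) _ g) (IsLocalization.Away.invSelf g)) :
    ∃ c, ∀ x : dominationRegion f g r, |awayEval x b| ≤ c := by
  have hquot {p} {x : dominationRegion f g r} (hp : |eval x.1 p| ≤ |eval x.1 g|) :
      |awayEval x (algebraMap _ _ p * IsLocalization.Away.invSelf g)| ≤ 1 := by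
    rw [awayEval_mul_invSelf, abs_div]
    exact div_le_one_of_le₀ hp (abs_nonneg _)
  refine exists_bound_of_mem_adjoin awayEval ?_ hb
  rintro _ ((⟨i, rfl⟩ | rfl | rfl) | ⟨i, rfl⟩)
  · exact ⟨r, fun x ↦ by simpa [awayEval_algebraMap] using x.2.1 i⟩
  · obtain ⟨c, hc⟩ := exists_bound_eval_of_abs_le g r
    exact ⟨c, fun x ↦ by simpa only [awayEval_algebraMap] using hc x x.2.1⟩
  · exact ⟨1, fun x ↦ by rw [aeval_algebraMap_X]; exact hquot x.2.2.2.1⟩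
  · exact ⟨1, fun x ↦ by simp only [aeval_algebraMap_X]; exact hquot (x.2.2.2.2 i)⟩

theorem exists_abs_pow_le_on_dominationRegion [Finite σ] (hf : f ≠ 0) (hg : g ≠ 0) (r : ℝ) :
    ∃ n : ℕ, ∃ c, ∀ x ∈ dominationRegion f g r,
      |eval x f| ^ n ≤ c * |eval x f| * |eval x g| ^ n := by
  have : IsDomain (Localization.Away g) := IsLocalization.Away.isDomain _ hg
  have hf' : algebraMap _ (Localization.Away g) f ≠ 0 := by
    rwa [Ne, IsLocalization.to_map_eq_zero_iff _ (powers_le_nonZeroDivisors_of_noZeroDivisors hg)]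
  obtain ⟨n, b, hb, hfb⟩ := exists_mem_gradientChart_mul_pow_eq_mul
    (fun i ↦ algebraMap (MvPolynomial σ ℝ) (Localization.Away g) (X i)) (f := f)
    (by rwa [aeval_algebraMap_X]) (IsLocalization.Away.mul_invSelf g)
  obtain ⟨c, hc⟩ := exists_bound_awayEval (r := r) hb
  refine ⟨n, c, fun x hx ↦ ?_⟩
  have heq := congrArg (fun y ↦ |awayEval ⟨x, hx⟩ y|) hfb
  simp only [aeval_algebraMap_X, map_pow, awayEval_mul_invSelf, map_mul (awayEval _) _ b,
    awayEval_algebraMap, abs_pow, abs_div, abs_mul, div_pow] at heq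
  have hg0 : 0 < |eval x g| := abs_pos.2 hx.2.1
  rw [div_eq_iff (by positivity)] at heq
  rw [heq, mul_comm c]
  gcongr
  exact hc ⟨x, hx⟩

-- The exponent doubles as the constant, so that one large `n` serves all the charts at once.
theorem eventually_abs_pow_le [Finite σ] (f g : MvPolynomial σ ℝ) (r : ℝ) :
    ∀ᶠ n : ℕ in Filter.atTop, ∀ x ∈ dominationRegion f g r,
      |eval x f| ^ n ≤ n * |eval x f| * |eval x g| ^ n := by
  rcases eq_or_ne f 0 with rfl | hf
  · filter_upwards [Filter.eventually_ne_atTop 0] with n hn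
    simp [hn]
  rcases eq_or_ne g 0 with rfl | hg
  · simp [dominationRegion]
  obtain ⟨N, c, hc⟩ := exists_abs_pow_le_on_dominationRegion hf hg r
  filter_upwards [Filter.eventually_ge_atTop N, Filter.eventually_ge_atTop ⌈c⌉₊] with n hn hcn x hx
  obtain ⟨j, rfl⟩ := Nat.exists_eq_add_of_le hn
  have hcn := Nat.ceil_le.1 hcn
  calc |eval x f| ^ (N + j) = |eval x f| ^ N * |eval x f| ^ j := pow_add _ _ _
    _ ≤ (c * |eval x f| * |eval x g| ^ N) * |eval x g| ^ j :=
      mul_le_mul (hc x hx) (pow_le_pow_left₀ (abs_nonneg _) hx.2.2.1 j) (by positivity)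
        ((by positivity : (0 : ℝ) ≤ |eval x f| ^ N).trans (hc x hx))
    _ = c * |eval x f| * |eval x g| ^ (N + j) := by ring
    _ ≤ _ := by gcongr

theorem eventually_abs_pow_pred_le [Fintype σ] (f : MvPolynomial σ ℝ) (r : ℝ) :
    ∀ᶠ n : ℕ in Filter.atTop, ∀ x : σ → ℝ, (∀ i, |x i| ≤ r) → eval x f ≠ 0 →
      n * |eval x f| < 1 → |eval x f| ^ (n - 1) ≤ n * ‖evalGradient f x‖ ^ n := by
  filter_upwards [eventually_abs_pow_le f f r,
    Filter.eventually_all.2 fun i ↦ eventually_abs_pow_le f (pderiv i f) r,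
    Filter.eventually_ne_atTop 0] with n hself hpartial hn x hx hfx hsmall
  have hpos : 0 < |eval x f| := abs_pos.2 hfx
  set G := ‖evalGradient f x‖
  have hG (i : σ) : |eval x (pderiv i f)| ≤ G := norm_le_pi_norm (evalGradient f x) i
  rcases le_or_gt G |eval x f| with hle | hlt
  · have := hself x ⟨hx, hfx, le_rfl, fun i ↦ (hG i).trans hle⟩
    have hlt : n * |eval x f| * |eval x f| ^ n < 1 * |eval x f| ^ n := by gcongr
    linarith
  have hGpos : 0 < G := hpos.trans hlt
  obtain ⟨l, hl⟩ : ∃ l, G = |eval x (pderiv l f)| := by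
    by_contra! h
    exact (pi_norm_lt_iff hGpos).2 (fun i ↦ (hG i).lt_of_ne' (h i)) |>.false
  have hpow := hpartial l x ⟨hx, abs_pos.1 (hl ▸ hGpos), hl ▸ hlt.le, fun i ↦ hl ▸ hG i⟩
  rw [← pow_sub_one_mul hn, ← hl, mul_right_comm] at hpow
  exact le_of_mul_le_mul_right hpow hpos

theorem exists_abs_rpow_le_norm_evalGradient [Fintype σ] (f : MvPolynomial σ ℝ) (r : ℝ) :
    ∃ θ ∈ Set.Ico (0 : ℝ) 1, ∃ c ≥ (0 : ℝ), ∃ η > (0 : ℝ), ∀ x : σ → ℝ, (∀ i, |x i| ≤ r) →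
      eval x f ≠ 0 → |eval x f| < η → |eval x f| ^ θ ≤ c * ‖evalGradient f x‖ := by
  obtain ⟨n, hn, hn0⟩ :=
    ((eventually_abs_pow_pred_le f r).and (Filter.eventually_gt_atTop 0)).exists
  have hn1 : (1 : ℝ) ≤ n := mod_cast hn0
  refine ⟨(n - 1 : ℕ) / n, ⟨by positivity, (div_lt_one (by positivity)).2 (mod_cast by omega)⟩,
    n, by positivity, 1 / n, by positivity, fun x hx hfx hlt ↦ ?_⟩
  set G := ‖evalGradient f x‖
  have hpow : |eval x f| ^ (n - 1) ≤ (n * G) ^ n :=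
    calc |eval x f| ^ (n - 1) ≤ n * G ^ n := hn x hx hfx ((lt_div_iff₀' (by positivity)).1 hlt)
      _ ≤ n ^ n * G ^ n := by gcongr; exact le_self_pow₀ hn1 hn0.ne'
      _ = (n * G) ^ n := (mul_pow _ _ _).symm
  calc |eval x f| ^ (((n - 1 : ℕ) : ℝ) / n) = (|eval x f| ^ (n - 1)) ^ (n : ℝ)⁻¹ := by
        rw [div_eq_mul_inv, Real.rpow_mul (abs_nonneg _), Real.rpow_natCast]
    _ ≤ ((n * G) ^ n) ^ (n : ℝ)⁻¹ := by gcongr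
    _ = n * G := Real.pow_rpow_inv_natCast (by positivity) hn0.ne'

end Lojasiewicz

section Summability

theorem mul_rpow_sub_one_mul_sub_le {a b p : ℝ} (ha : 0 < a) (hb : 0 ≤ b) (hp0 : 0 ≤ p)
    (hp1 : p ≤ 1) : p * a ^ (p - 1) * (a - b) ≤ a ^ p - b ^ p := by
  have hbern : (b / a) ^ p ≤ 1 + p * (b / a - 1) := by
    simpa using rpow_one_add_le_one_add_mul_self
      (by linarith [div_nonneg hb ha.le] : -1 ≤ b / a - 1) hp0 hp1
  rw [Real.div_rpow hb ha.le, div_le_iff₀ (Real.rpow_pos_of_pos ha p)] at hbern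
  rw [Real.rpow_sub_one ha.ne']
  have : p * (a ^ p / a) * (a - b) = a ^ p - (1 + p * (b / a - 1)) * a ^ p := by
    field_simp
    ring
  linarith

theorem two_mul_le_add_rpow_sub_rpow {a b c C d d' θ : ℝ} (hθ : θ ∈ Set.Ico 0 1) (hc : 0 < c)
    (hC : 0 ≤ C) (hb : 0 ≤ b) (hd : 0 ≤ d) (hdesc : c * d' ^ 2 ≤ a - b)
    (hkl : 0 < a → a ^ θ ≤ C * d) :
    2 * d' ≤ d + C / (c * (1 - θ)) * (a ^ (1 - θ) - b ^ (1 - θ)) := by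
  have hab : b ≤ a := sub_nonneg.1 ((by positivity : 0 ≤ c * d' ^ 2).trans hdesc)
  have hp : 0 < 1 - θ := sub_pos.2 hθ.2
  rcases (hb.trans hab).eq_or_lt with rfl | ha
  · obtain rfl : b = 0 := le_antisymm hab hb
    have : d' = 0 := by
      rw [sub_self] at hdesc
      exact pow_eq_zero_iff two_ne_zero |>.1
        (le_antisymm (nonpos_of_mul_nonpos_right hdesc hc) (sq_nonneg _))
    simpa [this] using hd
  set Δ := a ^ (1 - θ) - b ^ (1 - θ)
  have hΔ : 0 ≤ Δ := sub_nonneg.2 (Real.rpow_le_rpow hb hab hp.le)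
  have htangent : (1 - θ) * (a - b) ≤ Δ * a ^ θ := by
    have := mul_rpow_sub_one_mul_sub_le ha hb hp.le (by linarith [hθ.1])
    rw [sub_sub_cancel_left, Real.rpow_neg ha.le] at this
    calc (1 - θ) * (a - b) = (1 - θ) * (a ^ θ)⁻¹ * (a - b) * a ^ θ := by
          field_simp [(Real.rpow_pos_of_pos ha θ).ne']
      _ ≤ Δ * a ^ θ := by gcongr
  have hsq : d' ^ 2 ≤ d * (C / (c * (1 - θ)) * Δ) := by
    rw [show d * (C / (c * (1 - θ)) * Δ) = Δ * (C * d) / (c * (1 - θ)) by ring,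
      le_div_iff₀ (by positivity)]
    calc d' ^ 2 * (c * (1 - θ)) = (1 - θ) * (c * d' ^ 2) := by ring
      _ ≤ (1 - θ) * (a - b) := by gcongr
      _ ≤ Δ * a ^ θ := htangent
      _ ≤ Δ * (C * d) := by gcongr; exact hkl ha
  have hnonneg : 0 ≤ d + C / (c * (1 - θ)) * Δ := by positivity
  refine abs_le_of_sq_le_sq' ?_ hnonneg |>.2
  nlinarith [sq_nonneg (d - C / (c * (1 - θ)) * Δ)]

theorem summable_of_two_mul_le_add_sub {d φ : ℕ → ℝ} (hd : ∀ k, 0 ≤ d k) (hφ : ∀ k, 0 ≤ φ k)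
    (h : ∀ k, 2 * d (k + 1) ≤ d k + (φ k - φ (k + 1))) : Summable d := by
  have hsum (n : ℕ) : ∑ k ∈ range n, d (k + 1) + d n + φ n ≤ d 0 + φ 0 := by
    induction n with
    | zero => simp
    | succ n ih =>
      rw [sum_range_succ]
      linarith [h n]
  rw [← summable_nat_add_iff 1]
  exact summable_of_sum_range_le (c := d 0 + φ 0) (fun k ↦ hd _) fun n ↦ by
    linarith [hsum n, hd n, hφ n]

theorem summable_of_kurdyka_lojasiewicz {h d : ℕ → ℝ} {θ c C : ℝ} (hθ : θ ∈ Set.Ico 0 1)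
    (hc : 0 < c) (hC : 0 ≤ C) (hd : ∀ k, 0 ≤ d k) (hh : ∀ k, 0 ≤ h k)
    (hdesc : ∀ k, c * d k ^ 2 ≤ h k - h (k + 1))
    (hkl : ∀ᶠ k in Filter.atTop, 0 < h (k + 1) → h (k + 1) ^ θ ≤ C * d k) : Summable d := by
  obtain ⟨K, hK⟩ := Filter.eventually_atTop.1 hkl
  have hp : 0 < 1 - θ := sub_pos.2 hθ.2
  rw [← summable_nat_add_iff K]
  refine summable_of_two_mul_le_add_sub
    (φ := fun k ↦ C / (c * (1 - θ)) * h (k + K + 1) ^ (1 - θ)) (fun k ↦ hd _)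
    (fun k ↦ mul_nonneg (by positivity) (Real.rpow_nonneg (hh _) _)) fun k ↦ ?_
  rw [← mul_sub, add_right_comm k 1 K]
  exact two_mul_le_add_rpow_sub_rpow hθ hc hC (hh _) (hd _) (hdesc _) (hK _ (Nat.le_add_left _ _))

end Summability

section Descent

open Filter MvPolynomial Topology

variable {σ τ : Type*}

theorem hasDerivAt_eval_update [Finite σ] [DecidableEq σ] (p : MvPolynomial σ ℝ) (x : σ → ℝ)
    (i : σ) (t : ℝ) :
    HasDerivAt (fun t ↦ eval (Function.update x i t) p)
      (eval (Function.update x i t) (pderiv i p)) t := by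
  have := Fintype.ofFinite σ
  induction p using MvPolynomial.induction_on with
  | C a => simpa using hasDerivAt_const t a
  | add p q hp hq => simpa only [map_add] using hp.fun_add hq
  | mul_X p j hp =>
    have hX := hasDerivAt_pi.1 (hasDerivAt_update x i t) j
    simp only [map_mul, eval_X, Derivation.leibniz, pderiv_X, smul_eq_mul, map_add]
    refine (hp.fun_mul hX).congr_deriv ?_
    rcases eq_or_ne i j with rfl | hij
    · simp [mul_comm, add_comm]
    · simp [hij.symm, mul_comm]

theorem eval_pderiv_eq_zero_of_forall_le [Finite σ] [DecidableEq σ] {p : MvPolynomial σ ℝ}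
    {x : σ → ℝ} {i : σ} (h : ∀ t, eval x p ≤ eval (Function.update x i t) p) :
    eval x (pderiv i p) = 0 := by
  have hmin : IsLocalMin (fun t ↦ eval (Function.update x i t) p) (x i) :=
    Eventually.of_forall fun t ↦ by simpa using h t
  simpa using hmin.hasDerivAt_eq_zero (hasDerivAt_eval_update p x i (x i))

theorem exists_lipschitzOnWith_evalGradient [Fintype σ] (p : MvPolynomial σ ℝ) (r : ℝ) :
    ∃ K, LipschitzOnWith K (evalGradient p) {x : σ → ℝ | ∀ i, |x i| ≤ r} := by
  have hcoord (j : σ) : AnalyticOnNhd ℝ (fun x : σ → ℝ ↦ x j) Set.univ :=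
    (ContinuousLinearMap.proj (R := ℝ) (φ := fun _ : σ ↦ ℝ) j).analyticOnNhd _
  have hcont : ContDiff ℝ 1 (evalGradient p) := contDiff_pi.2 fun i ↦
    (AnalyticOnNhd.aeval_mvPolynomial hcoord (pderiv i p)).contDiff
  have hcompact : IsCompact {x : σ → ℝ | ∀ i, |x i| ≤ r} := by
    simpa [Set.pi, abs_le] using isCompact_univ_pi fun _ : σ ↦ isCompact_Icc (a := -r) (b := r)
  exact hcont.locallyLipschitz.locallyLipschitzOn.exists_lipschitzOnWith_of_compact hcompact

theorem summable_of_descent_of_norm_evalGradient_le [Fintype σ] (p : MvPolynomial σ ℝ)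
    {x : ℕ → σ → ℝ} {d : ℕ → ℝ} {r c C : ℝ} (hx : ∀ k i, |x k i| ≤ r)
    (hd : ∀ k, 0 ≤ d k) (hc : 0 < c) (hC : 0 ≤ C)
    (hdesc : ∀ k, c * d k ^ 2 ≤ eval (x k) p - eval (x (k + 1)) p)
    (hgrad : ∀ k, ‖evalGradient p (x (k + 1))‖ ≤ C * d k) : Summable d := by
  have hanti : Antitone fun k ↦ eval (x k) p := antitone_nat_of_succ_le fun k ↦
    sub_nonneg.1 ((by positivity : 0 ≤ c * d k ^ 2).trans (hdesc k))
  obtain ⟨B, hB⟩ := exists_bound_eval_of_abs_le p r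
  have hbdd : BddBelow (Set.range fun k ↦ eval (x k) p) :=
    ⟨-B, by rintro _ ⟨k, rfl⟩; exact (abs_le.1 (hB _ (hx k))).1⟩
  set l := ⨅ k, eval (x k) p
  have hlim : Tendsto (fun k ↦ eval (x k) p) atTop (𝓝 l) := tendsto_atTop_ciInf hanti hbdd
  obtain ⟨θ, hθ, c', hc', η, hη, hkl⟩ :=
    exists_abs_rpow_le_norm_evalGradient (p - MvPolynomial.C l) r
  simp only [evalGradient_sub_C, map_sub, eval_C] at hkl
  refine summable_of_kurdyka_lojasiewicz (h := fun k ↦ eval (x k) p - l) hθ hc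
    (mul_nonneg hc' hC) hd (fun k ↦ sub_nonneg.2 (ciInf_le hbdd k))
    (fun k ↦ by simpa using hdesc k) ?_
  have hnear : ∀ᶠ k in atTop, eval (x (k + 1)) p < l + η :=
    (hlim.comp (tendsto_add_atTop_nat 1)).eventually_lt_const (lt_add_of_pos_right l hη)
  filter_upwards [hnear] with k hk hpos
  have := hkl (x (k + 1)) (hx _) hpos.ne' (by rw [abs_of_pos hpos]; linarith)
  rw [abs_of_pos hpos] at this
  calc (eval (x (k + 1)) p - l) ^ θ ≤ c' * ‖evalGradient p (x (k + 1))‖ := this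
    _ ≤ c' * (C * d k) := by gcongr; exact hgrad k
    _ = c' * C * d k := (mul_assoc _ _ _).symm

theorem norm_evalGradient_le_of_minimizers [Fintype σ] [Fintype τ] {p : MvPolynomial (σ ⊕ τ) ℝ}
    {s : Set (σ ⊕ τ → ℝ)} {K : NNReal} (hK : LipschitzOnWith K (evalGradient p) s)
    {u : σ → ℝ} {v v' : τ → ℝ} (hv : Sum.elim u v ∈ s) (hv' : Sum.elim u v' ∈ s)
    (hu_min : ∀ y, eval (Sum.elim u v) p ≤ eval (Sum.elim y v) p)
    (hv_min : ∀ y, eval (Sum.elim u v') p ≤ eval (Sum.elim u y) p) :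
    ‖evalGradient p (Sum.elim u v')‖ ≤ K * ‖v' - v‖ := by
  classical
  refine (pi_norm_le_iff_of_nonneg (by positivity)).2 ?_
  rintro (i | i)
  · have hzero : evalGradient p (Sum.elim u v) (.inl i) = 0 :=
      eval_pderiv_eq_zero_of_forall_le fun t ↦ by simpa only [Sum.update_elim_inl] using hu_min _
    have hdist : dist (Sum.elim u v') (Sum.elim u v) ≤ ‖v' - v‖ := by
      rw [dist_eq_norm]
      refine (pi_norm_le_iff_of_nonneg (norm_nonneg _)).2 ?_
      rintro (j | j)
      · simp
      · exact norm_le_pi_norm (v' - v) j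
    calc ‖evalGradient p (Sum.elim u v') (.inl i)‖
        = dist (evalGradient p (Sum.elim u v') (.inl i)) (evalGradient p (Sum.elim u v) (.inl i)) :=
          by rw [hzero, dist_zero_right]
      _ ≤ K * dist (Sum.elim u v') (Sum.elim u v) :=
        (dist_le_pi_dist _ _ (Sum.inl i)).trans (hK.dist_le_mul _ hv' _ hv)
      _ ≤ K * ‖v' - v‖ := by gcongr
  · have hzero : evalGradient p (Sum.elim u v') (.inr i) = 0 :=
      eval_pderiv_eq_zero_of_forall_le fun t ↦ by simpa only [Sum.update_elim_inr] using hv_min _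
    rw [hzero, norm_zero]
    positivity

theorem summable_of_alternating_minimizers [Finite σ] [Fintype τ] (p : MvPolynomial (σ ⊕ τ) ℝ)
    {u : ℕ → σ → ℝ} {v : ℕ → τ → ℝ} {d : ℕ → ℝ} {r c : ℝ} (hc : 0 < c)
    (hu : ∀ k i, |u k i| ≤ r) (hv : ∀ k i, |v k i| ≤ r)
    (hu_min : ∀ k y, eval (Sum.elim (u (k + 1)) (v k)) p ≤ eval (Sum.elim y (v k)) p)
    (hv_min : ∀ k y,
      eval (Sum.elim (u (k + 1)) (v (k + 1))) p ≤ eval (Sum.elim (u (k + 1)) y) p)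
    (hd : ∀ k, ‖v (k + 1) - v k‖ ≤ d k)
    (hdesc : ∀ k, c * d k ^ 2 ≤
      eval (Sum.elim (u k) (v k)) p - eval (Sum.elim (u (k + 1)) (v (k + 1))) p) :
    Summable d := by
  have := Fintype.ofFinite σ
  obtain ⟨K, hK⟩ := exists_lipschitzOnWith_evalGradient p r
  have hmem (k l : ℕ) (i : σ ⊕ τ) : |Sum.elim (u k) (v l) i| ≤ r :=
    i.casesOn (hu k) (hv l)
  refine summable_of_descent_of_norm_evalGradient_le p (x := fun k ↦ Sum.elim (u k) (v k))
    (fun k ↦ hmem k k) (fun k ↦ (norm_nonneg _).trans (hd k)) hc K.2 hdesc fun k ↦ ?_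
  calc ‖evalGradient p (Sum.elim (u (k + 1)) (v (k + 1)))‖
      ≤ K * ‖v (k + 1) - v k‖ :=
        norm_evalGradient_le_of_minimizers hK (hmem _ _) (hmem _ _) (hu_min k) (hv_min k)
    _ ≤ K * d k := by gcongr; exact hd k

end Descent

section Objective

theorem convexOn_finsetSum {E ι : Type*} [AddCommGroup E] [Module ℝ E] {S : Set E}
    (hS : Convex ℝ S) {f : ι → E → ℝ} {s : Finset ι} (h : ∀ i ∈ s, ConvexOn ℝ S (f i)) :
    ConvexOn ℝ S fun x ↦ ∑ i ∈ s, f i x := by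
  have := Finset.sum_induction f (ConvexOn ℝ S) (fun _ _ ↦ ConvexOn.add) (convexOn_const 0 hS) h
  simpa only [Finset.sum_fn] using this

theorem convexOn_norm_sub_sq {E F : Type*} [AddCommGroup E] [Module ℝ E]
    [SeminormedAddCommGroup F] [NormedSpace ℝ F] (L : E →ₗ[ℝ] F) (b : F) :
    ConvexOn ℝ Set.univ fun x ↦ ‖L x - b‖ ^ 2 := by
  have hnorm : ConvexOn ℝ Set.univ fun x ↦ ‖L x - b‖ := by
    simpa only [dist_eq_norm, Function.comp_def, Set.preimage_univ] using
      (convexOn_dist b convex_univ).comp_linearMap L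
  exact hnorm.pow (fun _ _ ↦ norm_nonneg _) 2

theorem linearMap_eq_sum_smul_single {R E m n : Type*} [CommSemiring R] [AddCommMonoid E]
    [Module R E] [Fintype m] [Fintype n] [DecidableEq m] [DecidableEq n]
    (L : Matrix m n R →ₗ[R] E) (W : Matrix m n R) :
    L W = ∑ i, ∑ j, W i j • L (Matrix.single i j 1) := by
  conv_lhs => rw [matrix_eq_sum_single W]
  simp only [map_sum, ← map_smul, smul_single, smul_eq_mul, mul_one]

theorem frobSq_nonneg {a b : ℕ} (X : Matrix (Fin a) (Fin b) ℝ) : 0 ≤ frobSq X :=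
  sum_nonneg fun _ _ ↦ sum_nonneg fun _ _ ↦ sq_nonneg _

theorem sq_le_frobSq {a b : ℕ} (X : Matrix (Fin a) (Fin b) ℝ) (i : Fin a) (j : Fin b) :
    X i j ^ 2 ≤ frobSq X :=
  (single_le_sum (f := fun j ↦ X i j ^ 2) (fun _ _ ↦ sq_nonneg _) (mem_univ j)).trans
    (single_le_sum (f := fun i ↦ ∑ j, X i j ^ 2)
      (fun _ _ ↦ sum_nonneg fun _ _ ↦ sq_nonneg _) (mem_univ i))

theorem norm_vec_le_sqrt_frobSq {a b : ℕ} (X : Matrix (Fin a) (Fin b) ℝ) :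
    ‖X.vec‖ ≤ √(frobSq X) :=
  (pi_norm_le_iff_of_nonneg (Real.sqrt_nonneg _)).2 fun i ↦
    Real.abs_le_sqrt (sq_le_frobSq X i.2 i.1)

theorem frobSq_midpoint {a b : ℕ} (X Y : Matrix (Fin a) (Fin b) ℝ) :
    frobSq (midpoint ℝ X Y) = (frobSq X + frobSq Y) / 2 - frobSq (X - Y) / 4 := by
  simp only [frobSq, midpoint_eq_smul_add, sum_div, ← sum_add_distrib, ← sum_sub_distrib,
    Matrix.smul_apply, Matrix.add_apply, Matrix.sub_apply, smul_eq_mul, invOf_eq_inv]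
  exact sum_congr rfl fun i _ ↦ sum_congr rfl fun j _ ↦ by ring

theorem frobSq_sub_le_of_forall_le {a b : ℕ} {φ : Matrix (Fin a) (Fin b) ℝ → ℝ}
    (hφ : ConvexOn ℝ Set.univ φ) {X : Matrix (Fin a) (Fin b) ℝ}
    (hX : ∀ Y, frobSq X / 2 + φ X ≤ frobSq Y / 2 + φ Y) (Y : Matrix (Fin a) (Fin b) ℝ) :
    frobSq (X - Y) / 4 ≤ (frobSq Y / 2 + φ Y) - (frobSq X / 2 + φ X) := by
  have hconv := hφ.2 (Set.mem_univ X) (Set.mem_univ Y) (by norm_num : (0 : ℝ) ≤ 1 / 2)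
    (by norm_num : (0 : ℝ) ≤ 1 / 2) (by norm_num)
  have hmid := hX (midpoint ℝ X Y)
  rw [frobSq_midpoint, midpoint_eq_smul_add, smul_add, invOf_eq_inv, ← one_div] at hmid
  simp only [smul_eq_mul] at hconv
  linarith

variable {m n r p : ℕ} (Ω : Finset (Fin m × Fin n)) (M : Matrix (Fin m) (Fin n) ℝ)
  (L : Matrix (Fin m) (Fin n) ℝ →ₗ[ℝ] EuclideanSpace ℝ (Fin p)) (b : EuclideanSpace ℝ (Fin p))
  (μ ν : ℝ)

/-- The data-fitting part of `objF`, as a function of the product `W = UV`. -/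
noncomputable def dataMisfit (W : Matrix (Fin m) (Fin n) ℝ) : ℝ :=
  (μ / 2) * ∑ ij ∈ Ω, ((W - M) ij.1 ij.2) ^ 2 + (ν / 2) * ‖L W - b‖ ^ 2

theorem objF_eq (U : Matrix (Fin m) (Fin r) ℝ) (V : Matrix (Fin r) (Fin n) ℝ) :
    objF Ω M L b μ ν U V = (frobSq U + frobSq V) / 2 + dataMisfit Ω M L b μ ν (U * V) := by
  unfold objF dataMisfit
  ring

variable {μ ν}

theorem dataMisfit_nonneg (hμ : 0 ≤ μ) (hν : 0 ≤ ν) (W : Matrix (Fin m) (Fin n) ℝ) :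
    0 ≤ dataMisfit Ω M L b μ ν W := by
  unfold dataMisfit
  positivity

theorem convexOn_dataMisfit (hμ : 0 ≤ μ) (hν : 0 ≤ ν) :
    ConvexOn ℝ Set.univ (dataMisfit Ω M L b μ ν) := by
  have hentry (ij : Fin m × Fin n) :
      ConvexOn ℝ Set.univ fun W : Matrix (Fin m) (Fin n) ℝ ↦ ((W - M) ij.1 ij.2) ^ 2 := by
    simpa using convexOn_norm_sub_sq (entryLinearMap ℝ ℝ ij.1 ij.2) (M ij.1 ij.2)
  exact ((convexOn_finsetSum convex_univ fun ij _ ↦ hentry ij).smul (by positivity)).add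
    ((convexOn_norm_sub_sq L b).smul (by positivity))

theorem frobSq_sub_left_le (hμ : 0 ≤ μ) (hν : 0 ≤ ν) {U : Matrix (Fin m) (Fin r) ℝ}
    {V : Matrix (Fin r) (Fin n) ℝ}
    (hU : ∀ U', objF Ω M L b μ ν U V ≤ objF Ω M L b μ ν U' V) (U' : Matrix (Fin m) (Fin r) ℝ) :
    frobSq (U - U') / 4 ≤ objF Ω M L b μ ν U' V - objF Ω M L b μ ν U V := by
  have hconv := ((convexOn_dataMisfit Ω M L b hμ hν).comp_linearMap
    (mulRightLinearMap (Fin m) ℝ V)).add_const (frobSq V / 2)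
  have hobj (U : Matrix (Fin m) (Fin r) ℝ) : objF Ω M L b μ ν U V =
      frobSq U / 2 + (dataMisfit Ω M L b μ ν (U * V) + frobSq V / 2) := by
    rw [objF_eq]
    ring
  simp only [hobj] at hU ⊢
  exact frobSq_sub_le_of_forall_le hconv hU U'

theorem frobSq_sub_right_le (hμ : 0 ≤ μ) (hν : 0 ≤ ν) {U : Matrix (Fin m) (Fin r) ℝ}
    {V : Matrix (Fin r) (Fin n) ℝ}
    (hV : ∀ V', objF Ω M L b μ ν U V ≤ objF Ω M L b μ ν U V') (V' : Matrix (Fin r) (Fin n) ℝ) :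
    frobSq (V - V') / 4 ≤ objF Ω M L b μ ν U V' - objF Ω M L b μ ν U V := by
  have hconv := ((convexOn_dataMisfit Ω M L b hμ hν).comp_linearMap
    (mulLeftLinearMap (Fin n) ℝ U)).add_const (frobSq U / 2)
  have hobj (V : Matrix (Fin r) (Fin n) ℝ) : objF Ω M L b μ ν U V =
      frobSq V / 2 + (dataMisfit Ω M L b μ ν (U * V) + frobSq U / 2) := by
    rw [objF_eq]
    ring
  simp only [hobj] at hV ⊢
  exact frobSq_sub_le_of_forall_le hconv hV V'

theorem sq_sqrt_frobSq_add_le_objF_sub (hμ : 0 ≤ μ) (hν : 0 ≤ ν)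
    {U U' : Matrix (Fin m) (Fin r) ℝ} {V V' : Matrix (Fin r) (Fin n) ℝ}
    (hU : ∀ Y, objF Ω M L b μ ν U' V ≤ objF Ω M L b μ ν Y V)
    (hV : ∀ Y, objF Ω M L b μ ν U' V' ≤ objF Ω M L b μ ν U' Y) :
    1 / 8 * (√(frobSq (U' - U)) + √(frobSq (V' - V))) ^ 2 ≤
      objF Ω M L b μ ν U V - objF Ω M L b μ ν U' V' := by
  have hsq := add_sq_le (a := √(frobSq (U' - U))) (b := √(frobSq (V' - V)))
  rw [Real.sq_sqrt (frobSq_nonneg _), Real.sq_sqrt (frobSq_nonneg _)] at hsq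
  linarith [frobSq_sub_left_le Ω M L b hμ hν hU U, frobSq_sub_right_le Ω M L b hμ hν hV V]

theorem norm_vec_le_sqrt_objF (hμ : 0 ≤ μ) (hν : 0 ≤ ν) (U : Matrix (Fin m) (Fin r) ℝ)
    (V : Matrix (Fin r) (Fin n) ℝ) :
    ‖U.vec‖ ≤ √(2 * objF Ω M L b μ ν U V) ∧ ‖V.vec‖ ≤ √(2 * objF Ω M L b μ ν U V) := by
  have hmisfit := dataMisfit_nonneg Ω M L b hμ hν (U * V)
  rw [objF_eq]
  constructor
  · refine (norm_vec_le_sqrt_frobSq U).trans (Real.sqrt_le_sqrt ?_)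
    linarith [frobSq_nonneg V]
  · refine (norm_vec_le_sqrt_frobSq V).trans (Real.sqrt_le_sqrt ?_)
    linarith [frobSq_nonneg U]

open MvPolynomial in
variable (μ ν) in
theorem exists_eval_eq_objF : ∃ P : MvPolynomial ((Fin r × Fin m) ⊕ (Fin n × Fin r)) ℝ,
    ∀ U V, eval (Sum.elim (vec U) (vec V)) P = objF Ω M L b μ ν U V := by
  let W : Matrix (Fin m) (Fin n) (MvPolynomial ((Fin r × Fin m) ⊕ (Fin n × Fin r)) ℝ) :=
    .of fun i j ↦ ∑ k, X (.inl (k, i)) * X (.inr (j, k))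
  have hW U V i j : eval (Sum.elim (vec U) (vec V)) (W i j) = (U * V) i j := by
    simp [W, Matrix.mul_apply]
  refine ⟨C (1 / 2) * (∑ i, ∑ k, X (.inl (k, i)) ^ 2 + ∑ k, ∑ j, X (.inr (j, k)) ^ 2)
    + C (μ / 2) * ∑ ij ∈ Ω, (W ij.1 ij.2 - C (M ij.1 ij.2)) ^ 2
    + C (ν / 2) * ∑ c, (∑ i, ∑ j, W i j * C (L (Matrix.single i j 1) c) - C (b c)) ^ 2,
    fun U V ↦ ?_⟩
  simp [objF, frobSq, hW, linearMap_eq_sum_smul_single L (U * V), EuclideanSpace.real_norm_sq_eq]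

end Objective

/-- Summable convergence of alternating minimization (Proposition 1):
`∑ₖ (‖U^{(k+1)} − U^{(k)}‖_F + ‖V^{(k+1)} − V^{(k)}‖_F) < +∞`. -/
theorem objF_iterates_summable {m n r p : ℕ} (Ω : Finset (Fin m × Fin n)) (M : Matrix (Fin m) (Fin n) ℝ)
    (L : Matrix (Fin m) (Fin n) ℝ →ₗ[ℝ] EuclideanSpace ℝ (Fin p))
    (b : EuclideanSpace ℝ (Fin p)) (μ ν : ℝ) (hμ : 0 < μ) (hν : 0 < ν)
    (U : ℕ → Matrix (Fin m) (Fin r) ℝ) (V : ℕ → Matrix (Fin r) (Fin n) ℝ)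
    (hUstep : ∀ (k : ℕ) (U' : Matrix (Fin m) (Fin r) ℝ),
      objF Ω M L b μ ν (U (k + 1)) (V k) ≤ objF Ω M L b μ ν U' (V k))
    (hVstep : ∀ (k : ℕ) (V' : Matrix (Fin r) (Fin n) ℝ),
      objF Ω M L b μ ν (U (k + 1)) (V (k + 1)) ≤ objF Ω M L b μ ν (U (k + 1)) V') :
    Summable (fun k : ℕ =>
      Real.sqrt (frobSq (U (k + 1) - U k)) + Real.sqrt (frobSq (V (k + 1) - V k))) := by
  obtain ⟨P, hP⟩ := exists_eval_eq_objF (r := r) Ω M L b μ ν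
  have hanti : Antitone fun k ↦ objF Ω M L b μ ν (U k) (V k) := antitone_nat_of_succ_le fun k ↦
    (hVstep k (V k)).trans (hUstep k (U k))
  have hbdd (k : ℕ) : √(2 * objF Ω M L b μ ν (U k) (V k)) ≤ √(2 * objF Ω M L b μ ν (U 0) (V 0)) :=
    Real.sqrt_le_sqrt (mul_le_mul_of_nonneg_left (hanti k.zero_le) zero_le_two)
  have hnorm (k : ℕ) := norm_vec_le_sqrt_objF Ω M L b hμ.le hν.le (U k) (V k)
  refine summable_of_alternating_minimizers P (u := fun k ↦ (U k).vec) (v := fun k ↦ (V k).vec)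
    (c := 1 / 8) (by norm_num) (fun k i ↦ ((norm_le_pi_norm _ i).trans (hnorm k).1).trans (hbdd k))
    (fun k i ↦ ((norm_le_pi_norm _ i).trans (hnorm k).2).trans (hbdd k)) (fun k ↦ ?_) (fun k ↦ ?_)
    (fun k ↦ ?_) (fun k ↦ ?_)
  · refine vec_bijective.surjective.forall.2 fun U' ↦ ?_
    simpa only [hP] using hUstep k U'
  · refine vec_bijective.surjective.forall.2 fun V' ↦ ?_
    simpa only [hP] using hVstep k V'
  · rw [← vec_sub]
    exact (norm_vec_le_sqrt_frobSq _).trans (le_add_of_nonneg_left (Real.sqrt_nonneg _))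
  · simpa only [hP] using sq_sqrt_frobSq_add_le_objF_sub Ω M L b hμ.le hν.le (hUstep k) (hVstep k)
end
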